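/- Let θ ∈ ℝ with sin θ ≠ −1 (for the + sign) respectively sin θ ≠ 1 (for the − sign), and define f± = √((1 ± sin θ)/2), g± = cos θ/(√2·√(1 ± sin θ)), and for φ ∈ ℝ the vector v±(φ) = (i·f±·e^{iφ}, 0, 0, g±) ∈ ℂ⁴. Then the Berry phase γ± = i·∫₀^{2π} ⟨v±(φ), (d/dφ)v±(φ)⟩ dφ equals −π·(1 ± sin θ), where ⟨·,·⟩ is the standard Hermitian inner product on ℂ⁴ (conjugate-linear in the first argument). -/

import Mathlib

/-!
The eigenstate is the orbit of a fixed vector under a diagonal rotation of phases. Along such an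
orbit `v k = c k * exp (i * w k * φ)` one has `∂_φ v k = i * w k * v k` and `|v k| = |c k|`, so
`⟨v, ∂_φ v⟩` is the constant `i * ∑ k, w k * |c k| ^ 2` and the Berry phase is
`-2π * ∑ k, w k * |c k| ^ 2`. Here only the first component rotates, with weight `1` and squared
modulus `(1 + ε * sin θ) / 2`.
-/

open Matrix Complex

/-- The eigenstate |λ^{ε}(θ,φ)⟩ = (i·f·e^{iφ}, 0, 0, g), with
f = √((1 + ε·sin θ)/2) and g = cos θ/(√2·√(1 + ε·sin θ)), for the sign ε = ±1. -/
noncomputable def vv (θ ε : ℝ) (φ : ℝ) : Fin 4 → ℂ :=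
  ![Complex.I * (Real.sqrt ((1 + ε * Real.sin θ) / 2) : ℂ) * Complex.exp (Complex.I * φ),
    0, 0,
    ((Real.cos θ / (Real.sqrt 2 * Real.sqrt (1 + ε * Real.sin θ)) : ℝ) : ℂ)]

section PhaseRotation

variable {ι : Type*}

/-- The orbit of `c` under the rotation of the `k`-th coordinate by the phase `w k * φ`. The weights
are real; the orbit is a loop on `[0, 2π]` when those of the nonzero coordinates are integers. -/
noncomputable def phaseRotation (w : ι → ℝ) (c : ι → ℂ) (φ : ℝ) : ι → ℂ :=
  fun k => c k * exp ((w k * φ : ℝ) * I)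

lemma norm_phaseRotation_apply (w : ι → ℝ) (c : ι → ℂ) (φ : ℝ) (k : ι) :
    ‖phaseRotation w c φ k‖ = ‖c k‖ := by
  rw [phaseRotation, norm_mul, norm_exp_ofReal_mul_I, mul_one]

lemma hasDerivAt_phaseRotation (w : ι → ℝ) (c : ι → ℂ) (φ : ℝ) :
    HasDerivAt (phaseRotation w c) (fun k => I * w k * phaseRotation w c φ k) φ := by
  refine hasDerivAt_pi.2 fun k => ?_
  have hphase : HasDerivAt (fun x : ℝ => ((w k * x : ℝ) : ℂ) * I) (w k * I) φ :=
    (hasDerivAt_const_mul (w k)).ofReal_comp.mul_const I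
  refine (hphase.cexp.const_mul (c k)).congr_deriv ?_
  rw [phaseRotation]
  ring

variable [Fintype ι]

/-- The Berry phase `i ∫₀^{2π} ⟨v, ∂_φ v⟩ dφ` of a family of vectors in `ℂ^ι` parametrized by an
angle. The Hermitian product is written as a dot product with the conjugate, so that families are
plain functions; `deriv` and the integral make the value meaningful only for, say, `C¹` families. -/
noncomputable def berryPhase (v : ℝ → ι → ℂ) : ℂ :=
  I * ∫ φ in (0 : ℝ)..(2 * Real.pi), star (v φ) ⬝ᵥ deriv v φ

lemma star_phaseRotation_dotProduct_deriv (w : ι → ℝ) (c : ι → ℂ) (φ : ℝ) :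
    star (phaseRotation w c φ) ⬝ᵥ deriv (phaseRotation w c) φ =
      I * ∑ k, (w k * ‖c k‖ ^ 2 : ℂ) := by
  rw [(hasDerivAt_phaseRotation w c φ).deriv, dotProduct, Finset.mul_sum]
  refine Finset.sum_congr rfl fun k _ => ?_
  calc star (phaseRotation w c φ k) * (I * w k * phaseRotation w c φ k)
      = I * (w k * (star (phaseRotation w c φ k) * phaseRotation w c φ k)) := by ring
    _ = I * (w k * ‖c k‖ ^ 2) := by
      rw [star_def, conj_mul', norm_phaseRotation_apply]

theorem berryPhase_phaseRotation (w : ι → ℝ) (c : ι → ℂ) :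
    berryPhase (phaseRotation w c) = -(2 * Real.pi) * ∑ k, (w k * ‖c k‖ ^ 2 : ℂ) := by
  simp only [berryPhase, star_phaseRotation_dotProduct_deriv, intervalIntegral.integral_const,
    sub_zero, real_smul, ofReal_mul, ofReal_ofNat]
  linear_combination (2 * Real.pi * ∑ k, (w k * ‖c k‖ ^ 2 : ℂ)) * I_sq

end PhaseRotation

lemma vv_eq_phaseRotation (θ ε : ℝ) :
    vv θ ε = phaseRotation ![1, 0, 0, 0]
      ![I * (Real.sqrt ((1 + ε * Real.sin θ) / 2) : ℂ), 0, 0,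
        ((Real.cos θ / (Real.sqrt 2 * Real.sqrt (1 + ε * Real.sin θ)) : ℝ) : ℂ)] := by
  ext φ k
  fin_cases k <;> simp [vv, phaseRotation, mul_comm I (φ : ℂ)]

lemma one_add_mul_sin_pos {θ ε : ℝ} (hε : ε = 1 ∨ ε = -1) (h : Real.sin θ ≠ -ε) :
    0 < 1 + ε * Real.sin θ := by
  rcases hε with rfl | rfl
  · linarith [(Real.neg_one_le_sin θ).lt_of_ne' h]
  · rw [neg_neg] at h
    linarith [(Real.sin_le_one θ).lt_of_ne h]

theorem berry_phase_general (θ ε : ℝ) (h : 0 < 1 + ε * Real.sin θ) :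
    Complex.I * ∫ φ in (0:ℝ)..(2 * Real.pi),
        (fun k => starRingEnd ℂ (vv θ ε φ k)) ⬝ᵥ deriv (vv θ ε) φ
      = -(Real.pi : ℂ) * (1 + (ε : ℂ) * (Real.sin θ : ℂ)) := by
  have hf : ‖I * (Real.sqrt ((1 + ε * Real.sin θ) / 2) : ℂ)‖ ^ 2 =
      (1 + ε * Real.sin θ) / 2 := by
    rw [norm_mul, norm_I, one_mul, norm_real, Real.norm_eq_abs, sq_abs, Real.sq_sqrt (by linarith)]
  calc berryPhase (vv θ ε)
      = -(2 * Real.pi) *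
          ((‖I * (Real.sqrt ((1 + ε * Real.sin θ) / 2) : ℂ)‖ ^ 2 : ℝ) : ℂ) := by
        rw [vv_eq_phaseRotation, berryPhase_phaseRotation, Fin.sum_univ_four]
        simp
    _ = -(Real.pi : ℂ) * (1 + (ε : ℂ) * (Real.sin θ : ℂ)) := by
        rw [hf]
        push_cast
        ring

/-- The Berry phase γ± = i·∫₀^{2π} ⟨v±(φ), ∂_φ v±(φ)⟩ dφ equals −π(1 ± sin θ),
where the sign ε = 1 (with sin θ ≠ −1) or ε = −1 (with sin θ ≠ 1). -/
theorem berry_phase (θ ε : ℝ) (hε : ε = 1 ∨ ε = -1) (h : Real.sin θ ≠ -ε) :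
    Complex.I * ∫ φ in (0:ℝ)..(2 * Real.pi),
        (fun k => starRingEnd ℂ (vv θ ε φ k)) ⬝ᵥ deriv (vv θ ε) φ
      = -(Real.pi : ℂ) * (1 + (ε : ℂ) * (Real.sin θ : ℂ)) :=
  berry_phase_general θ ε (one_add_mul_sin_pos hε h)
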